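/- Let b ≥ 1 be an integer and let T be the directed tree obtained from the digraph D' of the previous construction (directed cycle v₁ → v₂ → … → v_{2b} → v₁ with added arcs (v'ᵢ, vᵢ) for 1 ≤ i ≤ 2b) by removing one arc of the directed cycle. Then γ(T) = 2b and γ₁ᵒ(T) = 3b; in particular γ₁ᵒ(T) − γ(T) = b, so the difference between the global offensive 1-alliance number and the domination number can be arbitrarily large for directed trees. -/

import Mathlib

open Finset

variable {V : Type*}

/-- In-degree of `v` from the set `T` in the digraph with arc relation `A`. -/
def inDegOn [Fintype V] (A : V → V → Prop) [DecidableRel A] (T : Finset V) (v : V) : ℕ :=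
  (T.filter fun u => A u v).card

/-- `S` is a global offensive `k`-alliance in the digraph with arc relation `A`. -/
def GOkA [Fintype V] [DecidableEq V] (A : V → V → Prop) [DecidableRel A] (k : ℤ)
    (S : Finset V) : Prop :=
  ∀ v ∉ S, (∃ u ∈ S, A u v) ∧ ((inDegOn A Sᶜ v : ℤ) + k ≤ (inDegOn A S v : ℤ))

/-- The global offensive `k`-alliance number of a digraph. -/
noncomputable def goNum [Fintype V] [DecidableEq V] (A : V → V → Prop) [DecidableRel A]
    (k : ℤ) : ℕ :=
  sInf {m | ∃ S : Finset V, GOkA A k S ∧ S.card = m}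

/-- `S` is a dominating set of the digraph with arc relation `A`. -/
def Dominating [Fintype V] (A : V → V → Prop) (S : Finset V) : Prop :=
  ∀ v ∉ S, ∃ u ∈ S, A u v

/-- The domination number of a digraph. -/
noncomputable def domNum [Fintype V] (A : V → V → Prop) : ℕ :=
  sInf {m | ∃ S : Finset V, Dominating A S ∧ S.card = m}

/-- The arc relation of the directed tree `T` obtained from `D'` (a directed cycle
`v₁ → ⋯ → v_{2b} → v₁` with pendant in-neighbors `v'ᵢ → vᵢ`) by removing the cycle arc
`(v_{2b}, v₁)`: the left summand carries the path `v₁ → ⋯ → v_{2b}` and each right-summand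
vertex `v'ᵢ` has the single arc `(v'ᵢ, vᵢ)`. -/
def TreeArc (b : ℕ) : (Fin (2 * b) ⊕ Fin (2 * b)) → (Fin (2 * b) ⊕ Fin (2 * b)) → Prop
  | Sum.inl i, Sum.inl j => (j : ℕ) = (i : ℕ) + 1
  | Sum.inr i, Sum.inl j => i = j
  | _, _ => False

instance (b : ℕ) : DecidableRel (TreeArc b) := fun u v => by
  rcases u with i | i <;> rcases v with j | j <;> simp only [TreeArc] <;> infer_instance

/-! `T` arises from the directed path `v₁ → ⋯ → v_{2b}` by attaching a pendant in-neighbor to every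
vertex. The pendant vertices are sources, so they lie in every dominating set, and together they
already dominate: the domination number is the order of the path. All in-degrees of `T` are at most
two, and then a vertex outside a global offensive `1`-alliance cannot afford a single in-neighbor
outside it; hence the global offensive `1`-alliances are exactly the dominating vertex covers. A
smallest one consists of all pendant vertices and a smallest vertex cover of the path, which has
`b` elements. -/

section Alliance

variable {A : V → V → Prop} {S : Finset V}

/-- `S` is a vertex cover of the digraph with arc relation `A`: every arc has an end in `S`. -/
def IsVertexCover (A : V → V → Prop) (S : Finset V) : Prop :=
  ∀ ⦃u v⦄, A u v → u ∈ S ∨ v ∈ S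

/-- The vertex cover number of a digraph, the smallest number of vertices meeting all arcs. -/
noncomputable def vertexCoverNum (A : V → V → Prop) : ℕ :=
  sInf {m | ∃ S : Finset V, IsVertexCover A S ∧ S.card = m}

theorem exists_isVertexCover_card_eq_vertexCoverNum [Finite V] (A : V → V → Prop) :
    ∃ S : Finset V, IsVertexCover A S ∧ S.card = vertexCoverNum A := by
  have := Fintype.ofFinite V
  have huniv : IsVertexCover A univ := fun u _ _ => .inl (mem_univ u)
  exact Nat.sInf_mem (s := {m | ∃ S : Finset V, IsVertexCover A S ∧ S.card = m})
    ⟨_, univ, huniv, rfl⟩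

theorem IsVertexCover.vertexCoverNum_le_card (hS : IsVertexCover A S) : vertexCoverNum A ≤ S.card :=
  Nat.sInf_le ⟨S, hS, rfl⟩

variable [Fintype V]

theorem Dominating.mem_of_forall_not_arc {v : V} (hS : Dominating A S) (hv : ∀ u, ¬ A u v) :
    v ∈ S := by
  by_contra hvS
  obtain ⟨u, -, hu⟩ := hS v hvS
  exact hv u hu

variable [DecidableRel A]

theorem inDegOn_pos {u v : V} (hu : u ∈ S) (huv : A u v) : 0 < inDegOn A S v :=
  card_pos.2 ⟨u, mem_filter.2 ⟨hu, huv⟩⟩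

theorem inDegOn_eq_zero {v : V} (h : ∀ u ∈ S, ¬ A u v) : inDegOn A S v = 0 :=
  card_eq_zero.2 (filter_eq_empty_iff.2 fun u => h u)

variable [DecidableEq V]

theorem inDegOn_add_inDegOn_compl (S : Finset V) (v : V) :
    inDegOn A S v + inDegOn A Sᶜ v = inDegOn A univ v := by
  unfold inDegOn
  rw [← card_union_of_disjoint (disjoint_filter_filter disjoint_compl_right), ← filter_union,
    union_compl]

theorem goNum_congr {B : V → V → Prop} [DecidableRel B] {k : ℤ} (h : A = B) :
    goNum A k = goNum B k := by
  subst h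
  congr!

theorem GOkA.dominating {k : ℤ} (hS : GOkA A k S) : Dominating A S :=
  fun v hv => (hS v hv).1

theorem GOkA.isVertexCover {k : ℤ} (hS : GOkA A k S) (hA : ∀ v, (inDegOn A univ v : ℤ) < k + 2) :
    IsVertexCover A S := by
  intro u v huv
  by_contra! ⟨hu, hv⟩
  have hout : 0 < inDegOn A Sᶜ v := inDegOn_pos (mem_compl.2 hu) huv
  have hoff := (hS v hv).2
  have hsum := inDegOn_add_inDegOn_compl (A := A) S v
  have hdeg := hA v
  omega

theorem Dominating.gOkA_one (hS : Dominating A S) (hcover : IsVertexCover A S) : GOkA A 1 S := by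
  intro v hv
  obtain ⟨u, hu, huv⟩ := hS v hv
  have hout : inDegOn A Sᶜ v = 0 := inDegOn_eq_zero fun w hw hwv =>
    (hcover hwv).elim (mem_compl.1 hw) hv
  have hin : 0 < inDegOn A S v := inDegOn_pos hu huv
  exact ⟨⟨u, hu, huv⟩, by omega⟩

theorem gOkA_one_iff_dominating_and_isVertexCover (hA : ∀ v, inDegOn A univ v ≤ 2) :
    GOkA A 1 S ↔ Dominating A S ∧ IsVertexCover A S :=
  ⟨fun hS => ⟨hS.dominating, hS.isVertexCover fun v => by have := hA v; omega⟩,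
    fun hS => hS.1.gOkA_one hS.2⟩

end Alliance

section InCorona

/-- The in-corona of the digraph with arc relation `A`: its vertices are `Sum.inl v`, spanning a
copy of the digraph, and for each of them a pendant in-neighbor `Sum.inr v`. Applied to a directed
cycle this is `D'`, applied to a directed path it is `T`. -/
def InCoronaArc (A : V → V → Prop) : V ⊕ V → V ⊕ V → Prop
  | Sum.inl u, Sum.inl v => A u v
  | Sum.inr u, Sum.inl v => u = v
  | _, _ => False

variable {A : V → V → Prop} {S : Finset (V ⊕ V)}

theorem not_inCoronaArc_inr (u : V ⊕ V) (v : V) : ¬ InCoronaArc A u (Sum.inr v) := by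
  cases u <;> exact id

theorem isVertexCover_inCoronaArc_iff_of_forall_inr_mem (hS : ∀ v, Sum.inr v ∈ S) :
    IsVertexCover (InCoronaArc A) S ↔ IsVertexCover A S.toLeft := by
  constructor
  · intro h u v huv
    simpa only [mem_toLeft] using @h (Sum.inl u) (Sum.inl v) huv
  · rintro h (u | u) (v | v) huv
    · simpa only [mem_toLeft] using h huv
    · exact .inr (hS v)
    all_goals exact .inl (hS u)

variable [Fintype V]

theorem dominating_inCoronaArc_iff :
    Dominating (InCoronaArc A) S ↔ ∀ v, Sum.inr v ∈ S := by
  refine ⟨fun hS v => hS.mem_of_forall_not_arc fun u => not_inCoronaArc_inr u v, ?_⟩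
  rintro hS (v | v) hv
  · exact ⟨Sum.inr v, hS v, rfl⟩
  · exact absurd (hS v) hv

theorem card_eq_card_add_card_toLeft_of_forall_inr_mem (hS : ∀ v, Sum.inr v ∈ S) :
    S.card = Fintype.card V + S.toLeft.card := by
  have hright : S.toRight = univ := eq_univ_of_forall fun v => mem_toRight.2 (hS v)
  rw [← card_toLeft_add_card_toRight, hright, card_univ, add_comm]

theorem domNum_inCoronaArc (A : V → V → Prop) :
    domNum (InCoronaArc A) = Fintype.card V := by
  refine IsLeast.csInf_eq ⟨⟨disjSum ∅ univ, ?_, by simp⟩, ?_⟩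
  · exact dominating_inCoronaArc_iff.2 fun v => inr_mem_disjSum.2 (mem_univ v)
  · rintro _ ⟨S, hS, rfl⟩
    rw [card_eq_card_add_card_toLeft_of_forall_inr_mem (dominating_inCoronaArc_iff.1 hS)]
    exact Nat.le_add_right _ _

variable [DecidableRel (InCoronaArc A)]

theorem inDegOn_inCoronaArc_le_two (hA : Relator.LeftUnique A) (v : V ⊕ V) :
    inDegOn (InCoronaArc A) univ v ≤ 2 := by
  obtain v | v := v
  · unfold inDegOn
    rw [← card_toLeft_add_card_toRight]
    refine Nat.add_le_add (card_le_one.2 fun u hu w hw => ?_) (card_le_one.2 fun u hu w hw => ?_)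
    all_goals simp only [mem_toLeft, mem_toRight, mem_filter_univ] at hu hw
    · exact hA hu hw
    · exact hu.trans hw.symm
  · rw [inDegOn_eq_zero fun u _ => not_inCoronaArc_inr u v]
    exact Nat.zero_le 2

variable [DecidableEq V]

theorem gOkA_one_inCoronaArc_iff (hA : Relator.LeftUnique A) :
    GOkA (InCoronaArc A) 1 S ↔ (∀ v, Sum.inr v ∈ S) ∧ IsVertexCover A S.toLeft := by
  rw [gOkA_one_iff_dominating_and_isVertexCover (inDegOn_inCoronaArc_le_two hA),
    dominating_inCoronaArc_iff]
  exact and_congr_right isVertexCover_inCoronaArc_iff_of_forall_inr_mem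

theorem goNum_one_inCoronaArc (hA : Relator.LeftUnique A) :
    goNum (InCoronaArc A) 1 = Fintype.card V + vertexCoverNum A := by
  refine IsLeast.csInf_eq ⟨?_, ?_⟩
  · obtain ⟨T, hT, hcard⟩ := exists_isVertexCover_card_eq_vertexCoverNum A
    refine ⟨T.disjSum univ, (gOkA_one_inCoronaArc_iff hA).2 ⟨fun v => ?_, ?_⟩, ?_⟩
    · exact inr_mem_disjSum.2 (mem_univ v)
    · rwa [toLeft_disjSum]
    · rw [card_disjSum, hcard, card_univ, add_comm]
  · rintro _ ⟨S, hS, rfl⟩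
    obtain ⟨hinr, hcover⟩ := (gOkA_one_inCoronaArc_iff hA).1 hS
    rw [card_eq_card_add_card_toLeft_of_forall_inr_mem hinr]
    exact Nat.add_le_add_left hcover.vertexCoverNum_le_card _

end InCorona

section Path

/-- The arc relation of the directed path on `n` vertices. -/
def PathArc (n : ℕ) (i j : Fin n) : Prop :=
  (j : ℕ) = i + 1

theorem leftUnique_pathArc (n : ℕ) : Relator.LeftUnique (PathArc n) :=
  fun _ _ _ hi hj => Fin.ext (Nat.succ_injective (hi.symm.trans hj))

theorem div_two_le_card_of_isVertexCover_pathArc {n : ℕ} {S : Finset (Fin n)}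
    (hS : IsVertexCover (PathArc n) S) : n / 2 ≤ S.card := by
  -- The arcs `2k → 2k + 1` form a matching, and `i ↦ i / 2` sends both ends of such an arc to `k`.
  have hsurj : Set.SurjOn (fun i : Fin n => (i : ℕ) / 2) S (range (n / 2)) := by
    intro k hk
    have hlt : k < n / 2 := by simpa using hk
    have harc : PathArc n ⟨2 * k, by omega⟩ ⟨2 * k + 1, by omega⟩ := rfl
    rcases hS harc with hmem | hmem <;> exact ⟨_, hmem, by dsimp only; omega⟩
  simpa only [card_range] using card_le_card_of_surjOn _ hsurj

theorem isVertexCover_pathArc_filter_odd (n : ℕ) :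
    IsVertexCover (PathArc n) ({i | Odd (i : ℕ)} : Finset (Fin n)) := by
  intro i j hij
  rw [mem_filter_univ, mem_filter_univ, hij, Nat.odd_add_one]
  exact em _

theorem card_filter_odd_fin_le (n : ℕ) :
    ({i | Odd (i : ℕ)} : Finset (Fin n)).card ≤ n / 2 := by
  rw [← card_range (n / 2)]
  refine card_le_card_of_injOn (fun i => (i : ℕ) / 2) ?_ ?_
  · intro i hi
    obtain ⟨k, hk⟩ := (mem_filter_univ i).1 hi
    have := i.isLt
    exact mem_coe.2 (mem_range.2 (by dsimp only; omega))
  · intro i hi j hj hij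
    obtain ⟨k, hk⟩ := (mem_filter_univ i).1 hi
    obtain ⟨l, hl⟩ := (mem_filter_univ j).1 hj
    exact Fin.ext (by dsimp only at hij; omega)

theorem vertexCoverNum_pathArc (n : ℕ) : vertexCoverNum (PathArc n) = n / 2 := by
  apply le_antisymm
  · calc vertexCoverNum (PathArc n)
      _ ≤ _ := (isVertexCover_pathArc_filter_odd n).vertexCoverNum_le_card
      _ ≤ n / 2 := card_filter_odd_fin_le n
  · obtain ⟨S, hS, hcard⟩ := exists_isVertexCover_card_eq_vertexCoverNum (PathArc n)
    exact hcard ▸ div_two_le_card_of_isVertexCover_pathArc hS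

end Path

theorem treeArc_eq_inCoronaArc (b : ℕ) : TreeArc b = InCoronaArc (PathArc (2 * b)) := by
  ext (u | u) (v | v) <;> rfl

/-- For the directed tree `T` obtained from `D'` by removing one arc of the directed cycle,
`γ(T) = 2b` and `γ₁ᵒ(T) = 3b`; hence `γ₁ᵒ(T) − γ(T) = b` can be arbitrarily large for
directed trees. -/
theorem domNum_goNum_gap_tree (b : ℕ) (hb : 1 ≤ b) :
    domNum (TreeArc b) = 2 * b ∧ goNum (TreeArc b) 1 = 3 * b := by
  classical
  rw [goNum_congr (treeArc_eq_inCoronaArc b), goNum_one_inCoronaArc (leftUnique_pathArc _),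
    treeArc_eq_inCoronaArc, domNum_inCoronaArc, vertexCoverNum_pathArc, Fintype.card_fin]
  omega
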